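/- The complex vector space of homogeneous polynomials of degree 4 in ℂ[y₀,y₁,y₂,y₃] that vanish at every singular point of the surface B₆ = 0 has dimension 10 (equivalently, the 30 singular points impose exactly 25 independent linear conditions on the 35-dimensional space of quartic forms). -/

import Mathlib

open MvPolynomial

/-- The quadric `S = y₀·y₁ − y₂·y₃`. -/
noncomputable def polyS : MvPolynomial (Fin 4) ℂ := X 0 * X 1 - X 2 * X 3

/-- The six linear forms `F₁, …, F₆` (indexed by `Fin 6`). -/
noncomputable def polyF : Fin 6 → MvPolynomial (Fin 4) ℂ :=
  ![X 0,
    X 1,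
    4 * X 0 - 2 * X 2 - 2 * X 3 + X 1,
    X 0 - 2 * X 2 - 2 * X 3 + 4 * X 1,
    X 0 + X 2 + X 3 + X 1,
    X 0 - X 2 - X 3 + X 1]
/-- The sextic `B₆ = F₁·F₂·F₃·F₄·F₅·F₆ − S³`. -/
noncomputable def polyB6 : MvPolynomial (Fin 4) ℂ := (∏ i : Fin 6, polyF i) - polyS ^ 3
/-- The space of homogeneous quartic forms vanishing at every singular point of
the surface `B₆ = 0`. -/
noncomputable def quarticsVanishingOnSingB6 : Submodule ℂ (MvPolynomial (Fin 4) ℂ) :=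
  homogeneousSubmodule (Fin 4) ℂ 4 ⊓
    ⨅ (x : Fin 4 → ℂ) (_ : x ≠ 0 ∧ ∀ i : Fin 4, eval x (pderiv i polyB6) = 0),
      LinearMap.ker (aeval x : MvPolynomial (Fin 4) ℂ →ₐ[ℂ] ℂ).toLinearMap

/-- Case of distinct `u, v`. -/
theorem alg_sep (s p w : ℂ)
    (hp : p ≠ 0)
    (h1 : p * (2*s*(4*s^2+9*p-20*w*s+16*w^2) + (s^2-4*w^2)*(8*s-20*w)) = 0)
    (h2 : (s^2-4*w^2)*(4*s^2+18*p-20*w*s+16*w^2) - 3*(p-w^2)^2 = 0)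
    (h3 : p*(-8*w*(4*s^2+9*p-20*w*s+16*w^2) + (s^2-4*w^2)*(-20*s+32*w)) + 6*w*(p-w^2)^2 = 0) :
    False := by
  have h1' := (mul_eq_zero.1 h1).resolve_left hp
  have e : 9*s*p = -8*s^3+30*w*s^2-40*w^3 := by linear_combination h1'/2
  have g2 : (-4800)*w^6 + (23760)*s*w^5 + (1773)*s^2*w^4 + (-19740)*s^3*w^3 + (2052)*s^4*w^2 + (4680)*s^5*w + (-1164)*s^6 = 0 := by
    have : (9*s)^2*((s^2-4*w^2)*(4*s^2+18*p-20*w*s+16*w^2) - 3*(p-w^2)^2) = 0 := by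
      rw [h2, mul_zero]
    have e2 : (9*s)*(s^2-4*w^2)*((9*s)*(4*s^2-20*w*s+16*w^2)+18*(9*s*p)) - 3*(9*s*p-9*s*w^2)^2 = 0 := by
      linear_combination this
    rw [e] at e2
    linear_combination e2
  have g3 : (-105600)*w^7 + (96480)*s*w^6 + (72486)*s^2*w^5 + (-114600)*s^3*w^4 + (31896)*s^4*w^3 + (14400)*s^5*w^2 + (-9624)*s^6*w + (1440)*s^7 = 0 := by
    have e2 : (9*s*p)*(-8*w*((9*s)*(4*s^2-20*w*s+16*w^2)+9*(9*s*p)) + (s^2-4*w^2)*(-20*s+32*w)*(9*s)) + 6*w*(9*s*p-9*s*w^2)^2 = 0 := by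
      linear_combination (9*s)^2*h3
    rw [e] at e2
    linear_combination e2
  have hw : (187339329792000:ℂ) * w^12 = 0 := by
    linear_combination ((-353109711803720)*w^6 + (146268562553806)*s*w^5 + (315437703664600)*s^2*w^4 + (-225652652000584)*s^3*w^3 + (-6054806394400)*s^4*w^2 + (45128481789896)*s^5*w + (-9639716609760)*s^6)*g2 + ((16048667398940)*w^5 + (-71435610057433)*s*w^4 + (-41606320109860)*s^2*w^3 + (45229315931308)*s^3*w^2 + (15730704960520)*s^4*w + (-7792104259556)*s^5)*g3
  have hw0 : w = 0 := by simpa using hw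
  subst hw0
  have hs : s = 0 := by simpa using g2
  subst hs
  apply hp
  simpa using h2

theorem alg_sym (u v w : ℂ)
    (h0 : v*(4*u-4*w+v)*(u-4*w+4*v)*(u+2*w+v)*(u-2*w+v) + 4*u*v*(u-4*w+4*v)*(u+2*w+v)*(u-2*w+v)
      + u*v*(4*u-4*w+v)*(u+2*w+v)*(u-2*w+v) + u*v*(4*u-4*w+v)*(u-4*w+4*v)*(u-2*w+v)
      + u*v*(4*u-4*w+v)*(u-4*w+4*v)*(u+2*w+v) - 3*(u*v-w^2)^2*v = 0)
    (h1 : u*(4*u-4*w+v)*(u-4*w+4*v)*(u+2*w+v)*(u-2*w+v) + u*v*(u-4*w+4*v)*(u+2*w+v)*(u-2*w+v)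
      + 4*u*v*(4*u-4*w+v)*(u+2*w+v)*(u-2*w+v) + u*v*(4*u-4*w+v)*(u-4*w+4*v)*(u-2*w+v)
      + u*v*(4*u-4*w+v)*(u-4*w+4*v)*(u+2*w+v) - 3*(u*v-w^2)^2*u = 0)
    (h2 : -2*u*v*(u-4*w+4*v)*(u+2*w+v)*(u-2*w+v)
      -2*u*v*(4*u-4*w+v)*(u+2*w+v)*(u-2*w+v) + u*v*(4*u-4*w+v)*(u-4*w+4*v)*(u-2*w+v)
      - u*v*(4*u-4*w+v)*(u-4*w+4*v)*(u+2*w+v) + 3*(u*v-w^2)^2*w = 0) :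
    u*v-w^2 = 0 := by
  by_contra hS
  have hB : u*v*(4*u-4*w+v)*(u-4*w+4*v)*(u+2*w+v)*(u-2*w+v) = (u*v-w^2)^3 := by
    linear_combination (u*h0+v*h1+2*w*h2)/6
  have hp : u*v ≠ 0 := by
    intro h
    apply hS
    have : (u*v-w^2)^3 = 0 := by
      rw [← hB, h]; ring
    simpa using this
  by_cases huv : u = v
  · subst huv
    have hu : u ≠ 0 := fun h => hp (by rw [h]; ring)
    have c0 : (9*u^2-8*u*w+w^2)*(11*u^2-8*u*w-w^2) = 0 := by
      apply (mul_eq_zero.1 _).resolve_left hS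
      linear_combination hB
    have hS2 : (u*u-w^2)*(2*(u*u-w^2)) ≠ 0 := mul_ne_zero hS (mul_ne_zero two_ne_zero hS)
    rcases mul_eq_zero.1 c0 with q | q
    · have e1 : 18*u-8*w = 0 := by
        apply (mul_eq_zero.1 _).resolve_left hS2
        linear_combination (h0 + h1) - (2*u*(11*u^2-8*u*w-w^2)+(u*u-w^2)*(40*u-16*w)) * q
      have e2 : -8*u+2*w = 0 := by
        apply (mul_eq_zero.1 _).resolve_left hS2
        linear_combination (2*h2) - (-2*w*(11*u^2-8*u*w-w^2)+(u*u-w^2)*(-16*u)) * q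
      exact hu (by linear_combination (-1/14)*(e1 + 4*e2))
    · have e1 : 22*u-8*w = 0 := by
        apply (mul_eq_zero.1 _).resolve_left hS2
        linear_combination -(h0 + h1) + (2*u*(9*u^2-8*u*w+w^2)+(u*u-w^2)*(40*u-16*w)) * q
      have e2 : -8*u-2*w = 0 := by
        apply (mul_eq_zero.1 _).resolve_left hS2
        linear_combination -(2*h2) + (-2*w*(9*u^2-8*u*w+w^2)+(u*u-w^2)*(-16*u)) * q
      exact hu (by linear_combination (1/54)*(e1 - 4*e2))
  · have huv' : u - v ≠ 0 := sub_ne_zero.2 huv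
    have gp : ((u+v)^2-4*w^2)*(4*(u+v)^2+18*(u*v)-20*w*(u+v)+16*w^2) - 3*(u*v-w^2)^2 = 0 := by
      apply (mul_eq_zero.1 _).resolve_left huv'
      linear_combination h1 - h0
    refine alg_sep (u+v) (u*v) w hp ?_ gp ?_
    · linear_combination h0 - v * gp
    · linear_combination 2 * h2

theorem alg_main (y0 y1 y2 y3 : ℂ)
    (h0 : (1)*((1)*y1)*((4)*y0 + (1)*y1 + (-2)*y2 + (-2)*y3)*((1)*y0 + (4)*y1 + (-2)*y2 + (-2)*y3)*((1)*y0 + (1)*y1 + (1)*y2 + (1)*y3)*((1)*y0 + (1)*y1 + (-1)*y2 + (-1)*y3) + (4)*((1)*y0)*((1)*y1)*((1)*y0 + (4)*y1 + (-2)*y2 + (-2)*y3)*((1)*y0 + (1)*y1 + (1)*y2 + (1)*y3)*((1)*y0 + (1)*y1 + (-1)*y2 + (-1)*y3) + (1)*((1)*y0)*((1)*y1)*((4)*y0 + (1)*y1 + (-2)*y2 + (-2)*y3)*((1)*y0 + (1)*y1 + (1)*y2 + (1)*y3)*((1)*y0 + (1)*y1 + (-1)*y2 + (-1)*y3) + (1)*((1)*y0)*((1)*y1)*((4)*y0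 + (1)*y1 + (-2)*y2 + (-2)*y3)*((1)*y0 + (4)*y1 + (-2)*y2 + (-2)*y3)*((1)*y0 + (1)*y1 + (-1)*y2 + (-1)*y3) + (1)*((1)*y0)*((1)*y1)*((4)*y0 + (1)*y1 + (-2)*y2 + (-2)*y3)*((1)*y0 + (4)*y1 + (-2)*y2 + (-2)*y3)*((1)*y0 + (1)*y1 + (1)*y2 + (1)*y3) - 3*(y0*y1-y2*y3)^2*y1 = 0)
    (h1 : (1)*((1)*y0)*((4)*y0 + (1)*y1 + (-2)*y2 + (-2)*y3)*((1)*y0 + (4)*y1 + (-2)*y2 + (-2)*y3)*((1)*y0 + (1)*y1 + (1)*y2 + (1)*y3)*((1)*y0 + (1)*y1 + (-1)*y2 + (-1)*y3) + (1)*((1)*y0)*((1)*y1)*((1)*y0 + (4)*y1 + (-2)*y2 + (-2)*y3)*((1)*y0 + (1)*y1 + (1)*y2 + (1)*y3)*((1)*y0 + (1)*y1 + (-1)*y2 + (-1)*y3) + (4)*((1)*y0)*((1)*y1)*((4)*y0 + (1)*y1 + (-2)*y2 + (-2)*y3)*((1)*y0 + (1)*y1 + (1)*y2 + (1)*y3)*((1)*y0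 + (1)*y1 + (-1)*y2 + (-1)*y3) + (1)*((1)*y0)*((1)*y1)*((4)*y0 + (1)*y1 + (-2)*y2 + (-2)*y3)*((1)*y0 + (4)*y1 + (-2)*y2 + (-2)*y3)*((1)*y0 + (1)*y1 + (-1)*y2 + (-1)*y3) + (1)*((1)*y0)*((1)*y1)*((4)*y0 + (1)*y1 + (-2)*y2 + (-2)*y3)*((1)*y0 + (4)*y1 + (-2)*y2 + (-2)*y3)*((1)*y0 + (1)*y1 + (1)*y2 + (1)*y3) - 3*(y0*y1-y2*y3)^2*y0 = 0)
    (h2 : (-2)*((1)*y0)*((1)*y1)*((1)*y0 + (4)*y1 + (-2)*y2 + (-2)*y3)*((1)*y0 + (1)*y1 + (1)*y2 + (1)*y3)*((1)*y0 + (1)*y1 + (-1)*y2 + (-1)*y3) + (-2)*((1)*y0)*((1)*y1)*((4)*y0 + (1)*y1 + (-2)*y2 + (-2)*y3)*((1)*y0 + (1)*y1 + (1)*y2 + (1)*y3)*((1)*y0 + (1)*y1 + (-1)*y2 + (-1)*y3) + (1)*((1)*y0)*((1)*y1)*((4)*y0 + (1)*y1 + (-2)*y2 + (-2)*y3)*((1)*y0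 + (4)*y1 + (-2)*y2 + (-2)*y3)*((1)*y0 + (1)*y1 + (-1)*y2 + (-1)*y3) + (-1)*((1)*y0)*((1)*y1)*((4)*y0 + (1)*y1 + (-2)*y2 + (-2)*y3)*((1)*y0 + (4)*y1 + (-2)*y2 + (-2)*y3)*((1)*y0 + (1)*y1 + (1)*y2 + (1)*y3) - 3*(y0*y1-y2*y3)^2*(-y3) = 0)
    (h3 : (-2)*((1)*y0)*((1)*y1)*((1)*y0 + (4)*y1 + (-2)*y2 + (-2)*y3)*((1)*y0 + (1)*y1 + (1)*y2 + (1)*y3)*((1)*y0 + (1)*y1 + (-1)*y2 + (-1)*y3) + (-2)*((1)*y0)*((1)*y1)*((4)*y0 + (1)*y1 + (-2)*y2 + (-2)*y3)*((1)*y0 + (1)*y1 + (1)*y2 + (1)*y3)*((1)*y0 + (1)*y1 + (-1)*y2 + (-1)*y3) + (1)*((1)*y0)*((1)*y1)*((4)*y0 + (1)*y1 + (-2)*y2 + (-2)*y3)*((1)*y0 + (4)*y1 + (-2)*y2 + (-2)*y3)*((1)*y0 + (1)*y1 + (-1)*y2 + (-1)*y3) + (-1)*((1)*y0)*((1)*y1)*((4)*y0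 + (1)*y1 + (-2)*y2 + (-2)*y3)*((1)*y0 + (4)*y1 + (-2)*y2 + (-2)*y3)*((1)*y0 + (1)*y1 + (1)*y2 + (1)*y3) - 3*(y0*y1-y2*y3)^2*(-y2) = 0) : y0*y1-y2*y3 = 0 := by
  by_contra hS
  have e : y3 = y2 := by
    have : (3 * (y0*y1-y2*y3)^2) * (y3 - y2) = 0 := by linear_combination h2 - h3
    have := (mul_eq_zero.1 this).resolve_left (by simpa using hS)
    linear_combination this
  subst e
  apply hS
  have := alg_sym y0 y1 y3 (by linear_combination h0) (by linear_combination h1)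
    (by linear_combination h2)
  linear_combination this

theorem pderiv_two (i : Fin 4) : pderiv i (2 : MvPolynomial (Fin 4) ℂ) = 0 :=
  Derivation.map_natCast (pderiv i) 2

theorem pderiv_four (i : Fin 4) : pderiv i (4 : MvPolynomial (Fin 4) ℂ) = 0 :=
  Derivation.map_natCast (pderiv i) 4

theorem sing_imp (x : Fin 4 → ℂ) (hx : ∀ i : Fin 4, eval x (pderiv i polyB6) = 0) :
    eval x polyS = 0 := by
  have h0 := hx 0
  have h1 := hx 1
  have h2 := hx 2
  have h3 := hx 3
  simp [polyB6, polyF, polyS, Fin.prod_univ_six, Derivation.leibniz, Derivation.leibniz_pow,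
    pderiv_X, pderiv_two, pderiv_four] at h0 h1 h2 h3
  have := alg_main (x 0) (x 1) (x 2) (x 3) (by linear_combination h0) (by linear_combination h1)
    (by linear_combination h2) (by linear_combination h3)
  simpa [polyS] using this

theorem polyS_hom : polyS.IsHomogeneous 2 :=
  ((isHomogeneous_X ℂ 0).mul (isHomogeneous_X ℂ 1)).sub
    ((isHomogeneous_X ℂ 2).mul (isHomogeneous_X ℂ 3))

theorem polyS_ne : polyS ≠ 0 := by
  intro h
  have := congrArg (eval ![1, 1, 0, 0]) h
  simp [polyS] at this

theorem component_mul (g : MvPolynomial (Fin 4) ℂ) :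
    homogeneousComponent 4 (polyS * g) = polyS * homogeneousComponent 2 g := by
  letI : GradedAlgebra (homogeneousSubmodule (Fin 4) ℂ) := MvPolynomial.gradedAlgebra
  have := DirectSum.coe_decompose_mul_add_of_left_mem (homogeneousSubmodule (Fin 4) ℂ)
    (i := 2) (j := 2) (a := polyS) (b := g) polyS_hom
  have e := fun (p : MvPolynomial (Fin 4) ℂ) i => decomposition.decompose'_apply p i
  rw [← e, ← e]
  exact this

theorem finrank_two : Module.finrank ℂ (homogeneousSubmodule (Fin 4) ℂ 2) = 10 := by
  have h : homogeneousSubmodule (Fin 4) ℂ 2 =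
      restrictSupport ℂ {d : Fin 4 →₀ ℕ | d.degree = 2} :=
    homogeneousSubmodule_eq_finsupp_supported ..
  have hs : {d : Fin 4 →₀ ℕ | d.degree = 2} =
      ((Finset.univ : Finset (Fin 4)).finsuppAntidiag 2 : Set (Fin 4 →₀ ℕ)) := by
    ext d
    simp [Finsupp.degree_eq_sum]
  rw [h, hs, Module.finrank_eq_nat_card_basis (basisRestrictSupport ℂ _)]
  have := Finset.card_finsuppAntidiag_nat_eq_choose (s := (Finset.univ : Finset (Fin 4))) 2
  simp only [SetLike.coe_sort_coe, Nat.card_eq_fintype_card, Fintype.card_coe]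
  rw [this]
  decide

/-- The Segre substitution `y = (a c, b d, a d, b c)`. -/
noncomputable def segre : MvPolynomial (Fin 4) ℂ →ₐ[ℂ] MvPolynomial (Fin 4) ℂ :=
  aeval ![X 0 * X 2, X 1 * X 3, X 0 * X 3, X 1 * X 2]

/-- A monomial from its exponents. -/
noncomputable def mon (a b c d : ℕ) : MvPolynomial (Fin 4) ℂ :=
  X 0 ^ a * X 1 ^ b * X 2 ^ c * X 3 ^ d

theorem monomial_eq_mon (e : Fin 4 →₀ ℕ) :
    (monomial e (1:ℂ)) = mon (e 0) (e 1) (e 2) (e 3) := by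
  rw [monomial_eq, Finsupp.prod_fintype _ _ (by simp)]
  simp [Fin.prod_univ_four, mon]

/-- Linear section of the Segre substitution. -/
noncomputable def sect : MvPolynomial (Fin 4) ℂ →ₗ[ℂ] MvPolynomial (Fin 4) ℂ :=
  (basisMonomials (Fin 4) ℂ).constr ℂ (fun e =>
    mon (e 0 - e 3) (e 3 - e 0) (e 0 - (e 0 - e 3)) (e 2 - (e 0 - e 3)))

theorem sect_mon (a b c d : ℕ) :
    sect (mon a b c d) = mon (a - d) (d - a) (a - (a - d)) (c - (a - d)) := by
  have h : mon a b c d = basisMonomials (Fin 4) ℂ (Finsupp.equivFunOnFinite.symm ![a, b, c, d]) := by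
    rw [coe_basisMonomials]
    simp [monomial_eq_mon]
  rw [h, sect, Module.Basis.constr_basis]
  simp

theorem segre_mon (a b c d : ℕ) : segre (mon a b c d) = mon (a+c) (b+d) (a+d) (b+c) := by
  simp [segre, mon]
  ring

theorem dvd_sub_sect (f : MvPolynomial (Fin 4) ℂ) : polyS ∣ f - sect (segre f) := by
  induction f using MvPolynomial.induction_on' with
  | add p q hp hq =>
    rw [map_add, map_add]
    have := dvd_add hp hq
    convert this using 1
    ring
  | monomial e c =>
    have : monomial e c = c • monomial e (1:ℂ) := by simp [smul_monomial]
    rw [this, map_smul, map_smul, ← smul_sub]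
    rw [smul_eq_C_mul]
    apply Dvd.dvd.mul_left
    rw [monomial_eq_mon]
    generalize e 0 = d0
    generalize e 1 = d1
    generalize e 2 = d2
    generalize e 3 = d3
    rw [segre_mon, sect_mon]
    rcases le_total d0 d1 with h | h
    · obtain ⟨k, rfl⟩ := Nat.exists_eq_add_of_le h
      rw [show d0 + d2 - (d0 + k + d2) = 0 by omega, show d0 + k + d2 - (d0 + d2) = k by omega]
      have h2 := sub_dvd_pow_sub_pow (X 0 * X 1 : MvPolynomial (Fin 4) ℂ) (X 2 * X 3) d0
      have h3 := h2.mul_right (X 1 ^ k * X 2 ^ d2 * X 3 ^ d3)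
      refine Dvd.dvd.trans (show polyS ∣ _ from h3) (dvd_of_eq ?_)
      simp only [mon]
      simp
      ring
    · obtain ⟨k, rfl⟩ := Nat.exists_eq_add_of_le h
      rw [show d1 + k + d2 - (d1 + d2) = k by omega, show d1 + d2 - (d1 + k + d2) = 0 by omega,
        show d1 + k + d2 - k = d1 + d2 by omega, show d1 + k + d3 - k = d1 + d3 by omega]
      have h2 := sub_dvd_pow_sub_pow (X 0 * X 1 : MvPolynomial (Fin 4) ℂ) (X 2 * X 3) d1
      have h3 := h2.mul_right (X 0 ^ k * X 2 ^ d2 * X 3 ^ d3)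
      refine Dvd.dvd.trans (show polyS ∣ _ from h3) (dvd_of_eq ?_)
      simp only [mon]
      simp
      ring

theorem dvd_of_segre (f : MvPolynomial (Fin 4) ℂ) (h : segre f = 0) : polyS ∣ f := by
  simpa [h] using dvd_sub_sect f

/-- Image point of the Segre map, in the chart `a = l + 3 s`, `c = m + 3 t`. -/
noncomputable def pt (l m s t : ℂ) : Fin 4 → ℂ :=
  ![(l + 3*s) * (m + 3*t), s * t, (l + 3*s) * t, s * (m + 3*t)]

/-- Parameters of the six points of the projective line. -/
noncomputable def rt : Fin 6 → ℂ := ![-1/3, 0, -2/5, -1, -1/4, -1/2]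

theorem rt_inj : Function.Injective rt := by
  intro i j
  fin_cases i <;> fin_cases j <;> simp [rt] <;> norm_num

theorem polyF_left (i : Fin 6) (l m t : ℂ) : eval (pt l m (l * rt i) t) (polyF i) = 0 := by
  fin_cases i <;> simp [rt, pt, polyF] <;> ring_nf <;> simp

theorem polyF_right (i : Fin 6) (l m s : ℂ) : eval (pt l m s (m * rt i)) (polyF i) = 0 := by
  fin_cases i <;> simp [rt, pt, polyF] <;> ring_nf <;> simp

theorem polyS_pt (l m s t : ℂ) : eval (pt l m s t) polyS = 0 := by
  simp [pt, polyS]; ring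

theorem pt_ne (l m s t : ℂ) (hl : l ≠ 0) (hm : m ≠ 0) : pt l m s t ≠ 0 := by
  intro h
  have h0 := congrFun h 0
  have h1 := congrFun h 1
  have h2 := congrFun h 2
  have h3 := congrFun h 3
  simp only [pt, Matrix.cons_val, Pi.zero_apply] at h0 h1 h2 h3
  apply mul_ne_zero hl hm
  linear_combination h0 + 9 * h1 - 3 * h2 - 3 * h3

theorem sing_of (x : Fin 4 → ℂ) (i j : Fin 6) (hij : i ≠ j) (hi : eval x (polyF i) = 0)
    (hj : eval x (polyF j) = 0) (hS : eval x polyS = 0) (k : Fin 4) :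
    eval x (pderiv k polyB6) = 0 := by
  rw [polyB6, ← Finset.mul_prod_erase Finset.univ polyF (Finset.mem_univ i),
    ← Finset.mul_prod_erase (Finset.univ.erase i) polyF
      (Finset.mem_erase.2 ⟨hij.symm, Finset.mem_univ j⟩)]
  simp [Derivation.leibniz, Derivation.leibniz_pow, hi, hj, hS]

theorem segre_eq_zero (f : MvPolynomial (Fin 4) ℂ) (hf : f.IsHomogeneous 4)
    (hv : ∀ x : Fin 4 → ℂ, (x ≠ 0 ∧ ∀ i : Fin 4, eval x (pderiv i polyB6) = 0) → eval x f = 0) :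
    segre f = 0 := by
  have key : ∀ l m s t : ℂ, l ≠ 0 → m ≠ 0 → eval (pt l m s t) f = 0 := by
    intro l m s t hl hm
    have step1 : ∀ i t, eval (pt l m (l * rt i) t) f = 0 := by
      intro i t
      let q : Fin 4 → Polynomial ℂ := 
        ![Polynomial.C (3 * (l + 3*(l * rt i))) * Polynomial.X + Polynomial.C ((l + 3*(l * rt i)) * m),
          Polynomial.C (l * rt i) * Polynomial.X + Polynomial.C 0,
          Polynomial.C (l + 3*(l * rt i)) * Polynomial.X + Polynomial.C 0,
          Polynomial.C (3 * (l * rt i)) * Polynomial.X + Polynomial.C ((l * rt i) * m)]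
      have hq : ∀ t, (aeval q f).eval t = eval (pt l m (l * rt i) t) f := by
        intro t
        rw [← Polynomial.coe_evalRingHom, MvPolynomial.aeval_def, MvPolynomial.hom_eval₂]
        rw [← MvPolynomial.eval₂_id]
        congr 1
        · ext; simp
        · ext k
          fin_cases k <;> simp [q, pt] <;> ring
      have hz : aeval q f = 0 := by
        apply Polynomial.eq_zero_of_natDegree_lt_card_of_eval_eq_zero (ι := {j : Fin 6 // i ≠ j})
          (f := fun j => m * rt j) _
        · intro a b hab
          exact Subtype.ext (rt_inj (mul_left_cancel₀ hm hab))
        · rintro ⟨j, hij⟩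
          rw [hq]
          exact hv _ ⟨pt_ne _ _ _ _ hl hm, sing_of _ i j hij (polyF_left ..) (polyF_right ..)
            (polyS_pt ..)⟩
        · refine lt_of_le_of_lt (MvPolynomial.aeval_natDegree_le (m := 4) (n := 1) f
            hf.totalDegree_le q ?_) ?_
          · intro k
            fin_cases k <;> exact Polynomial.natDegree_linear_le
          · rw [Fintype.card_subtype_compl, Fintype.card_subtype_eq']
            simp
      rw [← hq, hz, Polynomial.eval_zero]
    let q : Fin 4 → Polynomial ℂ := 
        ![Polynomial.C (3 * (m + 3*t)) * Polynomial.X + Polynomial.C (l * (m + 3*t)),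
          Polynomial.C t * Polynomial.X + Polynomial.C 0,
          Polynomial.C (3*t) * Polynomial.X + Polynomial.C (l*t),
          Polynomial.C (m + 3*t) * Polynomial.X + Polynomial.C 0]
    have hq : ∀ s, (aeval q f).eval s = eval (pt l m s t) f := by
      intro s
      rw [← Polynomial.coe_evalRingHom, MvPolynomial.aeval_def, MvPolynomial.hom_eval₂]
      rw [← MvPolynomial.eval₂_id]
      congr 1
      · ext; simp
      · ext k
        fin_cases k <;> simp [q, pt] <;> ring
    have hz : aeval q f = 0 := by
      apply Polynomial.eq_zero_of_natDegree_lt_card_of_eval_eq_zero (ι := Fin 6)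
        (f := fun j => l * rt j) _
      · intro a b hab
        exact rt_inj (mul_left_cancel₀ hl hab)
      · intro j
        rw [hq]
        exact step1 j t
      · refine lt_of_le_of_lt (MvPolynomial.aeval_natDegree_le (m := 4) (n := 1) f
          hf.totalDegree_le q ?_) ?_
        · intro k
          fin_cases k <;> exact Polynomial.natDegree_linear_le
        · simp
    rw [← hq, hz, Polynomial.eval_zero]
  have hprod : ((X 0 - 3 * X 1) * (X 2 - 3 * X 3) : MvPolynomial (Fin 4) ℂ) * segre f = 0 := by
    apply MvPolynomial.funext
    intro x
    by_cases h1 : x 0 - 3 * x 1 = 0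
    · simp [h1]
    by_cases h2 : x 2 - 3 * x 3 = 0
    · simp [h2]
    have h3 := key _ _ (x 1) (x 3) h1 h2
    have h4 : eval x (segre f) = eval (pt (x 0 - 3 * x 1) (x 2 - 3 * x 3) (x 1) (x 3)) f := by
      rw [segre, MvPolynomial.aeval_def, MvPolynomial.hom_eval₂, ← MvPolynomial.eval₂_id]
      congr 1
      · ext; simp
      · ext k
        fin_cases k <;> simp [pt]
    rw [map_mul, h4, h3, mul_zero, map_zero]
  refine (mul_eq_zero.1 hprod).resolve_left ?_
  intro h
  have := congrArg (eval ![1, 0, 1, 0]) h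
  simp at this

/-- The `30` singular points of `B₆ = 0` impose exactly `25` independent conditions
on quartic forms: the space of quartics through them has dimension `10`. -/
theorem finrank_quartics_vanishing_on_singB6 :
    Module.finrank ℂ ↥quarticsVanishingOnSingB6 = 10 := by
  have h : quarticsVanishingOnSingB6 =
      (homogeneousSubmodule (Fin 4) ℂ 2).map (LinearMap.mulLeft ℂ polyS) := by
    ext f
    simp only [quarticsVanishingOnSingB6, Submodule.mem_inf, Submodule.mem_iInf,
      Submodule.mem_map, mem_homogeneousSubmodule, LinearMap.mem_ker, LinearMap.mulLeft_apply]
    constructor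
    · rintro ⟨hf, hv⟩
      have hv' : ∀ x : Fin 4 → ℂ, (x ≠ 0 ∧ ∀ i : Fin 4, eval x (pderiv i polyB6) = 0) →
          eval x f = 0 := by
        intro x hx
        have := hv x hx
        simpa [MvPolynomial.coe_aeval_eq_eval] using this
      obtain ⟨g, hg⟩ := dvd_of_segre f (segre_eq_zero f hf hv')
      refine ⟨homogeneousComponent 2 g, homogeneousComponent_isHomogeneous 2 g, ?_⟩
      rw [← component_mul, ← hg]
      exact homogeneousComponent_eq_self hf
    · rintro ⟨g, hg, rfl⟩
      refine ⟨?_, ?_⟩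
      · have := polyS_hom.mul hg
        simpa using this
      · intro x hx
        have hS := sing_imp x hx.2
        simp [MvPolynomial.coe_aeval_eq_eval, hS]
  rw [h]
  have hinj : Function.Injective (LinearMap.mulLeft ℂ polyS) := by
    intro a b hab
    exact mul_left_cancel₀ polyS_ne (by simpa using hab)
  rw [← (Submodule.equivMapOfInjective _ hinj _).finrank_eq, finrank_two]
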